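/- arXiv:1106.4075 — 3 statements merged into one kernel-verified Lean document; each statement's English description precedes it below -/
import Mathlib

section
/- Let X be a set and let K, G be positive semidefinite kernels on X given by feature maps: K(x,y) = ⟨Φ₁(x), Φ₁(y)⟩_{W₁} and G(x,y) = ⟨Φ₂(x), Φ₂(y)⟩_{W₂}, where Φ₁ : X → W₁ and Φ₂ : X → W₂ map into complex Hilbert spaces W₁, W₂ and the linear spans of Φ₁(X) and Φ₂(X) are dense in W₁ and W₂ respectively. Then there exists a constant λ ≥ 0 such that λG − K is a positive semidefinite kernel on X if and only if there exists a bounded linear operator T : W₂ → W₁ such that T(Φ₂(x)) = Φ₁(x) for all x ∈ X. -/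
open scoped ComplexOrder

/-- A function `K : X × X → ℂ` is a positive semidefinite kernel if every finite
quadratic form `∑ j, ∑ k, c j * conj (c k) * K (x j) (x k)` is a nonnegative real
number (here expressed via the partial order on `ℂ`). -/
def IsPSDKernel {X : Type*} (K : X → X → ℂ) : Prop :=
  ∀ (n : ℕ) (x : Fin n → X) (c : Fin n → ℂ),
    0 ≤ ∑ j, ∑ k, c j * (starRingEnd ℂ) (c k) * K (x j) (x k)

theorem quad_form_eq_norm_sq {X W : Type*} [NormedAddCommGroup W] [InnerProductSpace ℂ W]
    (Φ : X → W) (n : ℕ) (x : Fin n → X) (c : Fin n → ℂ) :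
    ∑ j, ∑ k, c j * (starRingEnd ℂ) (c k) * (inner ℂ (Φ (x j)) (Φ (x k)) : ℂ)
      = ((‖∑ j, (starRingEnd ℂ) (c j) • Φ (x j)‖ ^ 2 : ℝ) : ℂ) := by
  have h := inner_self_eq_norm_sq_to_K (𝕜 := ℂ) (∑ j, (starRingEnd ℂ) (c j) • Φ (x j))
  push_cast
  refine Eq.trans ?_ h
  rw [sum_inner]
  refine Finset.sum_congr rfl fun j _ => ?_
  rw [inner_sum]
  refine Finset.sum_congr rfl fun k _ => ?_
  rw [inner_smul_left, inner_smul_right, Complex.conj_conj]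
  ring

theorem quad_form_diff {X W₁ W₂ : Type*}
    [NormedAddCommGroup W₁] [InnerProductSpace ℂ W₁]
    [NormedAddCommGroup W₂] [InnerProductSpace ℂ W₂]
    (Φ₁ : X → W₁) (Φ₂ : X → W₂) (lam : ℝ) (n : ℕ) (x : Fin n → X) (c : Fin n → ℂ) :
    ∑ j, ∑ k, c j * (starRingEnd ℂ) (c k) *
      ((lam : ℂ) * (inner ℂ (Φ₂ (x j)) (Φ₂ (x k)) : ℂ) - (inner ℂ (Φ₁ (x j)) (Φ₁ (x k)) : ℂ))
      = ((lam * ‖∑ j, (starRingEnd ℂ) (c j) • Φ₂ (x j)‖ ^ 2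
          - ‖∑ j, (starRingEnd ℂ) (c j) • Φ₁ (x j)‖ ^ 2 : ℝ) : ℂ) := by
  rw [Complex.ofReal_sub, Complex.ofReal_mul, ← quad_form_eq_norm_sq, ← quad_form_eq_norm_sq,
    Finset.mul_sum, ← Finset.sum_sub_distrib]
  refine Finset.sum_congr rfl fun j _ => ?_
  rw [Finset.mul_sum, ← Finset.sum_sub_distrib]
  refine Finset.sum_congr rfl fun k _ => ?_
  ring

theorem linearCombination_eq_fin_sum {X W : Type*} [NormedAddCommGroup W]
    [InnerProductSpace ℂ W] (Φ : X → W) (l : X →₀ ℂ) :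
    Finsupp.linearCombination ℂ Φ l
      = ∑ j, l (l.support.equivFin.symm j : X) • Φ (l.support.equivFin.symm j : X) := by
  rw [Equiv.sum_comp l.support.equivFin.symm (fun i : l.support => l (i : X) • Φ (i : X)),
    Finset.sum_coe_sort l.support (fun i => l i • Φ i)]
  rfl

/-- Feature-map characterization of RKHS inclusion (kernel-domination form):
given kernels `K`, `G` with feature maps `Φ₁ : X → W₁`, `Φ₂ : X → W₂` having dense
spans, there exists `λ ≥ 0` with `λG − K` positive semidefinite if and only if
there is a bounded linear operator `T : W₂ → W₁` with `T (Φ₂ x) = Φ₁ x` for all `x`. -/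
theorem inclusion_iff_boundedOperator {X W₁ W₂ : Type*}
    [NormedAddCommGroup W₁] [InnerProductSpace ℂ W₁] [CompleteSpace W₁]
    [NormedAddCommGroup W₂] [InnerProductSpace ℂ W₂] [CompleteSpace W₂]
    (Φ₁ : X → W₁) (Φ₂ : X → W₂)
    (h₁ : Dense (Submodule.span ℂ (Set.range Φ₁) : Set W₁))
    (h₂ : Dense (Submodule.span ℂ (Set.range Φ₂) : Set W₂))
    (K G : X → X → ℂ)
    (hK : ∀ x y, K x y = (inner ℂ (Φ₁ x) (Φ₁ y) : ℂ))
    (hG : ∀ x y, G x y = (inner ℂ (Φ₂ x) (Φ₂ y) : ℂ)) :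
    (∃ lam : ℝ, 0 ≤ lam ∧
        IsPSDKernel (fun x y => (lam : ℂ) * G x y - K x y)) ↔
      (∃ T : W₂ →L[ℂ] W₁, ∀ x, T (Φ₂ x) = Φ₁ x) := by
  obtain rfl : K = fun x y => (inner ℂ (Φ₁ x) (Φ₁ y) : ℂ) := by
    funext x y
    exact hK x y
  obtain rfl : G = fun x y => (inner ℂ (Φ₂ x) (Φ₂ y) : ℂ) := by
    funext x y
    exact hG x y
  constructor
  · rintro ⟨lam, hlam, hpsd⟩
    have hdense : DenseRange (Finsupp.linearCombination ℂ Φ₂) := by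
      rw [← Finsupp.range_linearCombination] at h₂
      rwa [LinearMap.coe_range] at h₂
    have hnorm : ∃ C, ∀ l, ‖Finsupp.linearCombination ℂ Φ₁ l‖
        ≤ C * ‖Finsupp.linearCombination ℂ Φ₂ l‖ := by
      refine ⟨Real.sqrt lam, fun l => ?_⟩
      have h := hpsd _ (fun j => (l.support.equivFin.symm j : X))
        (fun j => (starRingEnd ℂ) (l (l.support.equivFin.symm j : X)))
      rw [quad_form_diff Φ₁ Φ₂, Complex.zero_le_real] at h
      simp only [Complex.conj_conj] at h
      rw [← linearCombination_eq_fin_sum, ← linearCombination_eq_fin_sum] at h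
      refine (sq_le_sq₀ (norm_nonneg _) (by positivity)).1 ?_
      rw [mul_pow, Real.sq_sqrt hlam]
      linarith
    refine ⟨(Finsupp.linearCombination ℂ Φ₁).extendOfNorm (Finsupp.linearCombination ℂ Φ₂),
      fun x => ?_⟩
    have h := LinearMap.extendOfNorm_eq hdense hnorm (Finsupp.single x 1)
    simpa using h
  · rintro ⟨T, hT⟩
    refine ⟨‖T‖ ^ 2, by positivity, fun n x c => ?_⟩
    rw [quad_form_diff Φ₁ Φ₂, Complex.zero_le_real, sub_nonneg, ← mul_pow]
    have h := T.le_opNorm (∑ j, (starRingEnd ℂ) (c j) • Φ₂ (x j))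
    simp only [map_sum, map_smul, hT] at h
    gcongr
end

section
/- Let μ, ν be finite positive Borel measures on ℝ^d and let K, G be the continuous translation invariant kernels K(x,y) = ∫_{ℝ^d} e^{i⟨x−y,ξ⟩} dμ(ξ) and G(x,y) = ∫_{ℝ^d} e^{i⟨x−y,ξ⟩} dν(ξ) for x, y ∈ ℝ^d. Then there exists λ ≥ 0 such that λG − K is a positive semidefinite kernel if and only if μ is absolutely continuous with respect to ν and the Radon–Nikodym derivative dμ/dν is ν-essentially bounded; in that case, the infimum of all λ ≥ 0 such that λG − K is a positive semidefinite kernel equals the ν-essential supremum ‖dμ/dν‖_{L^∞_ν(ℝ^d)}. -/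
open MeasureTheory
open scoped ComplexOrder

noncomputable section

/-- The character `ξ ↦ exp (i ⟨x, ξ⟩)`. -/
def chi {d : ℕ} (x ξ : EuclideanSpace ℝ (Fin d)) : ℂ :=
  Complex.exp (Complex.I * ((inner ℝ x ξ : ℝ) : ℂ))

lemma chi_continuous {d : ℕ} (x : EuclideanSpace ℝ (Fin d)) : Continuous (chi x) := by
  unfold chi; fun_prop

lemma chi_norm {d : ℕ} (x ξ : EuclideanSpace ℝ (Fin d)) : ‖chi x ξ‖ = 1 := by
  unfold chi; rw [mul_comm]; exact Complex.norm_exp_ofReal_mul_I _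

lemma chi_conj {d : ℕ} (x ξ : EuclideanSpace ℝ (Fin d)) :
    (starRingEnd ℂ) (chi x ξ) = chi (-x) ξ := by
  unfold chi; rw [← Complex.exp_conj]; simp

lemma chi_sub {d : ℕ} (x y ξ : EuclideanSpace ℝ (Fin d)) :
    chi (x - y) ξ = chi x ξ * (starRingEnd ℂ) (chi y ξ) := by
  rw [chi_conj]; unfold chi; rw [← Complex.exp_add, sub_eq_add_neg, inner_add_left]; push_cast; ring_nf

lemma chi_integrable {d : ℕ} (μ : Measure (EuclideanSpace ℝ (Fin d))) [IsFiniteMeasure μ]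
    (x : EuclideanSpace ℝ (Fin d)) : Integrable (chi x) μ :=
  Integrable.of_bound (chi_continuous x).aestronglyMeasurable 1
    (Filter.Eventually.of_forall fun ξ => (chi_norm x ξ).le)

lemma chi_memLp {d : ℕ} (μ : Measure (EuclideanSpace ℝ (Fin d))) [IsFiniteMeasure μ]
    (x : EuclideanSpace ℝ (Fin d)) : MemLp (chi x) 2 μ :=
  MemLp.of_bound (chi_continuous x).aestronglyMeasurable 1
    (Filter.Eventually.of_forall fun ξ => (chi_norm x ξ).le)

/-- A trigonometric polynomial. -/
def tp {d n : ℕ} (x : Fin n → EuclideanSpace ℝ (Fin d)) (c : Fin n → ℂ)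
    (ξ : EuclideanSpace ℝ (Fin d)) : ℂ := ∑ j, c j * chi (x j) ξ

lemma tp_continuous {d n : ℕ} (x : Fin n → EuclideanSpace ℝ (Fin d)) (c : Fin n → ℂ) :
    Continuous (tp x c) := by
  unfold tp
  exact continuous_finsetSum _ fun j _ => continuous_const.mul (chi_continuous _)

lemma tp_memLp {d n : ℕ} (x : Fin n → EuclideanSpace ℝ (Fin d)) (c : Fin n → ℂ)
    (μ : Measure (EuclideanSpace ℝ (Fin d))) [IsFiniteMeasure μ] : MemLp (tp x c) 2 μ := by
  unfold tp
  exact memLp_finsetSum _ fun j _ => (chi_memLp μ (x j)).const_mul (c j)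

lemma quad_eq {d n : ℕ} (x : Fin n → EuclideanSpace ℝ (Fin d)) (c : Fin n → ℂ)
    (μ : Measure (EuclideanSpace ℝ (Fin d))) [IsFiniteMeasure μ] :
    ∑ j, ∑ k, c j * (starRingEnd ℂ) (c k) * ∫ ξ, chi (x j - x k) ξ ∂μ
      = ((∫ ξ, ‖tp x c ξ‖ ^ 2 ∂μ : ℝ) : ℂ) := by
  rw [← integral_complex_ofReal]
  have h : ∀ ξ, ((‖tp x c ξ‖ ^ 2 : ℝ) : ℂ)
      = ∑ j, ∑ k, c j * (starRingEnd ℂ) (c k) * chi (x j - x k) ξ := by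
    intro ξ
    push_cast
    rw [← Complex.mul_conj', tp, map_sum, Finset.sum_mul_sum]
    refine Finset.sum_congr rfl fun j _ => Finset.sum_congr rfl fun k _ => ?_
    rw [chi_sub, map_mul]; ring
  simp_rw [h]
  rw [integral_finsetSum _ fun j _ => integrable_finsetSum _ fun k _ =>
    (chi_integrable μ _).const_mul _]
  refine Finset.sum_congr rfl fun j _ => ?_
  rw [integral_finsetSum _ fun k _ => (chi_integrable μ _).const_mul _]
  refine Finset.sum_congr rfl fun k _ => ?_
  rw [integral_const_mul]

/-- uniqueness of Fourier transforms for real densities -/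
lemma real_unique {d : ℕ} (ρ : Measure (EuclideanSpace ℝ (Fin d))) [IsFiniteMeasure ρ]
    (u : EuclideanSpace ℝ (Fin d) → ℝ) (hu : Integrable u ρ)
    (h : ∀ t, ∫ ξ, (u ξ : ℂ) * chi t ξ ∂ρ = 0) : u =ᵐ[ρ] 0 := by
  have hm : AEMeasurable (fun ξ => ENNReal.ofReal (u ξ)) ρ := hu.aemeasurable.ennreal_ofReal
  have hm' : AEMeasurable (fun ξ => ENNReal.ofReal (-u ξ)) ρ :=
    hu.aemeasurable.neg.ennreal_ofReal
  have hf1 : ∫⁻ ξ, ENNReal.ofReal (u ξ) ∂ρ ≠ ⊤ := hu.lintegral_lt_top.ne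
  have hf2 : ∫⁻ ξ, ENNReal.ofReal (-u ξ) ∂ρ ≠ ⊤ := hu.neg.lintegral_lt_top.ne
  have := isFiniteMeasure_withDensity hf1
  have := isFiniteMeasure_withDensity hf2
  have key : ρ.withDensity (fun ξ => ENNReal.ofReal (u ξ))
      = ρ.withDensity (fun ξ => ENNReal.ofReal (-u ξ)) := by
    apply Measure.ext_of_charFun
    funext t
    have hc : ∀ ξ, Complex.exp ((inner ℝ ξ t : ℝ) * Complex.I) = chi t ξ := by
      intro ξ; unfold chi; rw [real_inner_comm, mul_comm]
    simp only [charFun_apply, hc]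
    rw [integral_withDensity_eq_integral_toReal_smul₀ hm (by simp),
      integral_withDensity_eq_integral_toReal_smul₀ hm' (by simp), ← sub_eq_zero,
      ← integral_sub, ← h t]
    · refine integral_congr_ae (Filter.Eventually.of_forall fun ξ => ?_)
      simp only [ENNReal.toReal_ofReal', Complex.real_smul]
      rw [← sub_mul, ← Complex.ofReal_sub]
      congr 2
      rcases le_total (u ξ) 0 with h0 | h0 <;> simp [h0]
    · simp_rw [Complex.real_smul]
      refine Integrable.mul_bdd (c := 1) (Integrable.ofReal ?_) ?_ ?_
      · exact integrable_toReal_of_lintegral_ne_top hm hf1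
      · exact (chi_continuous t).aestronglyMeasurable
      · exact Filter.Eventually.of_forall fun ξ => (chi_norm t ξ).le
    · simp_rw [Complex.real_smul]
      refine Integrable.mul_bdd (c := 1) (Integrable.ofReal ?_) ?_ ?_
      · exact integrable_toReal_of_lintegral_ne_top hm' hf2
      · exact (chi_continuous t).aestronglyMeasurable
      · exact Filter.Eventually.of_forall fun ξ => (chi_norm t ξ).le
  rw [withDensity_eq_iff hm hm' hf1] at key
  filter_upwards [key] with ξ hξ
  simp only [Pi.zero_apply]
  rcases lt_trichotomy (u ξ) 0 with h0 | h0 | h0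
  · rw [ENNReal.ofReal_of_nonpos h0.le, eq_comm, ENNReal.ofReal_eq_zero] at hξ; linarith
  · exact h0
  · rw [ENNReal.ofReal_of_nonpos (p := -u ξ) (by linarith), ENNReal.ofReal_eq_zero] at hξ; linarith

lemma complex_unique {d : ℕ} (ρ : Measure (EuclideanSpace ℝ (Fin d))) [IsFiniteMeasure ρ]
    (f : EuclideanSpace ℝ (Fin d) → ℂ) (hf : Integrable f ρ)
    (h : ∀ t, ∫ ξ, f ξ * chi t ξ ∂ρ = 0) : f =ᵐ[ρ] 0 := by
  have hi : ∀ t, Integrable (fun ξ => f ξ * chi t ξ) ρ := fun t =>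
    hf.mul_bdd (c := 1) (chi_continuous t).aestronglyMeasurable
      (Filter.Eventually.of_forall fun ξ => (chi_norm t ξ).le)
  have hconj : ∀ t ξ, (starRingEnd ℂ) (f ξ) * chi t ξ = (starRingEnd ℂ) (f ξ * chi (-t) ξ) := by
    intro t ξ; rw [map_mul, chi_conj, neg_neg]
  have hi' : ∀ t, Integrable (fun ξ => (starRingEnd ℂ) (f ξ) * chi t ξ) ρ := fun t => by
    simp_rw [hconj]
    exact (LinearIsometryEquiv.integrable_comp_iff Complex.conjLIE).2 (hi (-t))
  have h' : ∀ t, ∫ ξ, (starRingEnd ℂ) (f ξ) * chi t ξ ∂ρ = 0 := fun t => by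
    simp_rw [hconj]
    rw [integral_conj, h, map_zero]
  have hre := real_unique ρ (fun ξ => (f ξ).re) hf.re fun t => by
    have : ∀ ξ, ((f ξ).re : ℂ) * chi t ξ
        = (1 / 2) * (f ξ * chi t ξ + (starRingEnd ℂ) (f ξ) * chi t ξ) := by
      intro ξ; rw [Complex.re_eq_add_conj]; ring
    simp_rw [this]
    rw [integral_const_mul, integral_add (hi t) (hi' t), h, h']; simp
  have him := real_unique ρ (fun ξ => (f ξ).im) hf.im fun t => by
    have : ∀ ξ, ((f ξ).im : ℂ) * chi t ξ
        = (1 / (2 * Complex.I)) * (f ξ * chi t ξ - (starRingEnd ℂ) (f ξ) * chi t ξ) := by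
      intro ξ; rw [Complex.im_eq_sub_conj]; ring
    simp_rw [this]
    rw [integral_const_mul, integral_sub (hi t) (hi' t), h, h']; simp
  filter_upwards [hre, him] with ξ h1 h2
  exact Complex.ext h1 h2

lemma tp_dense {d : ℕ} (ρ : Measure (EuclideanSpace ℝ (Fin d))) [IsFiniteMeasure ρ]
    (S : Set (EuclideanSpace ℝ (Fin d))) (hS : MeasurableSet S) (ε : ENNReal) (hε : 0 < ε) :
    ∃ (n : ℕ) (x : Fin n → EuclideanSpace ℝ (Fin d)) (c : Fin n → ℂ),
      eLpNorm (S.indicator (fun _ => (1 : ℂ)) - tp x c) 2 ρ < ε := by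
  set V : Submodule ℂ (Lp ℂ 2 ρ) :=
    Submodule.span ℂ (Set.range fun t => (chi_memLp ρ t).toLp (chi t)) with hV
  have hVo : Vᗮ = ⊥ := by
    rw [eq_bot_iff]
    intro f hf
    rw [Submodule.mem_orthogonal] at hf
    rw [Submodule.mem_bot, Lp.eq_zero_iff_ae_eq_zero]
    refine complex_unique ρ f ((Lp.memLp f).integrable (by norm_num)) fun t => ?_
    have := hf _ (Submodule.subset_span ⟨-t, rfl⟩)
    rw [L2.inner_def] at this
    rw [← this]
    refine integral_congr_ae ?_
    filter_upwards [(chi_memLp ρ (-t)).coeFn_toLp] with ξ hξ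
    rw [hξ, RCLike.inner_apply, chi_conj, neg_neg]
  have hcl : V.topologicalClosure = ⊤ := (Submodule.topologicalClosure_eq_top_iff).2 hVo
  have hmem : MemLp (S.indicator (fun _ => (1 : ℂ))) 2 ρ :=
    memLp_indicator_const 2 hS 1 (Or.inr (measure_ne_top _ _))
  have hin : hmem.toLp _ ∈ closure (V : Set (Lp ℂ 2 ρ)) := by
    rw [← Submodule.topologicalClosure_coe, hcl]; trivial
  rw [EMetric.mem_closure_iff] at hin
  obtain ⟨v, hv, hd⟩ := hin ε hε
  obtain ⟨n, c, g, hg⟩ := (Submodule.mem_span_set').1 hv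
  choose x hx using fun i => (g i).2
  refine ⟨n, x, c, ?_⟩
  have hvt : v = (tp_memLp x c ρ).toLp (tp x c) := by
    rw [← hg]
    simp_rw [← hx]
    apply Lp.ext
    refine (Lp.coeFn_finsetSum _ _).trans ?_
    filter_upwards [ae_all_iff.2 fun i => Lp.coeFn_smul (c i) ((chi_memLp ρ (x i)).toLp (chi (x i))),
      ae_all_iff.2 fun i => (chi_memLp ρ (x i)).coeFn_toLp,
      (tp_memLp x c ρ).coeFn_toLp] with ξ h1 h2 h3
    rw [h3, Finset.sum_apply, tp]
    refine Finset.sum_congr rfl fun i _ => ?_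
    rw [h1, Pi.smul_apply, h2, smul_eq_mul]
  rwa [hvt, Lp.edist_toLp_toLp] at hd

lemma measure_le {d : ℕ} (μ ν : Measure (EuclideanSpace ℝ (Fin d))) [IsFiniteMeasure μ]
    [IsFiniteMeasure ν] (lam : ℝ) (hl : 0 ≤ lam)
    (h : ∀ (n : ℕ) (x : Fin n → EuclideanSpace ℝ (Fin d)) (c : Fin n → ℂ),
      ∫ ξ, ‖tp x c ξ‖ ^ 2 ∂μ ≤ lam * ∫ ξ, ‖tp x c ξ‖ ^ 2 ∂ν) :
    ∀ S, MeasurableSet S → μ S ≤ ENNReal.ofReal lam * ν S := by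
  intro S hS
  set f : EuclideanSpace ℝ (Fin d) → ℂ := S.indicator (fun _ => (1 : ℂ)) with hf
  set s : ENNReal := ENNReal.ofReal lam ^ (1 / 2 : ℝ) with hs
  have hsfin : s ≠ ⊤ := by simp [hs]
  have hnorm : ∀ (κ : Measure (EuclideanSpace ℝ (Fin d))) [IsFiniteMeasure κ],
      eLpNorm f 2 κ = κ S ^ (1 / 2 : ℝ) := by
    intro κ _
    rw [hf, eLpNorm_indicator_const hS (by norm_num) (by norm_num)]
    simp
  have htp : ∀ (κ : Measure (EuclideanSpace ℝ (Fin d))) [IsFiniteMeasure κ] (n : ℕ)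
      (x : Fin n → EuclideanSpace ℝ (Fin d)) (c : Fin n → ℂ),
      eLpNorm (tp x c) 2 κ = (ENNReal.ofReal (∫ ξ, ‖tp x c ξ‖ ^ 2 ∂κ)) ^ (1 / 2 : ℝ) := by
    intro κ _ n x c
    rw [(tp_memLp x c κ).eLpNorm_eq_integral_rpow_norm (by norm_num) (by norm_num),
      ENNReal.ofReal_rpow_of_nonneg (integral_nonneg fun _ => by positivity) (by norm_num)]
    simp
  have hfm : MemLp f 2 (μ + ν) :=
    memLp_indicator_const 2 hS 1 (Or.inr (measure_ne_top _ _))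
  have hle : μ S ^ (1 / 2 : ℝ) ≤ s * ν S ^ (1 / 2 : ℝ) := by
    rw [← hnorm μ, ← hnorm ν]
    have main : ∀ ε : ENNReal, 0 < ε → eLpNorm f 2 μ ≤ s * eLpNorm f 2 ν + (s + 1) * ε := by
      intro ε hε
      obtain ⟨n, x, c, hx⟩ := tp_dense (μ + ν) S hS ε hε
      rw [← hf] at hx
      have hp : ∀ κ : Measure (EuclideanSpace ℝ (Fin d)), AEStronglyMeasurable (tp x c) κ :=
        fun κ => (tp_continuous x c).aestronglyMeasurable
      have hfa : ∀ κ : Measure (EuclideanSpace ℝ (Fin d)), AEStronglyMeasurable f κ :=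
        fun κ => (measurable_const.indicator hS).aestronglyMeasurable
      have h1 : eLpNorm (f - tp x c) 2 μ ≤ ε :=
        (eLpNorm_mono_measure _ (Measure.le_add_right le_rfl)).trans hx.le
      have h2 : eLpNorm (f - tp x c) 2 ν ≤ ε :=
        (eLpNorm_mono_measure _ (Measure.le_add_left le_rfl)).trans hx.le
      have h3 : eLpNorm (tp x c) 2 μ ≤ s * eLpNorm (tp x c) 2 ν := by
        rw [htp μ, htp ν, hs, ← ENNReal.mul_rpow_of_nonneg _ _ (by norm_num),
          ← ENNReal.ofReal_mul hl]
        gcongr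
        exact h n x c
      have h4 : eLpNorm (tp x c) 2 ν ≤ eLpNorm f 2 ν + ε := by
        calc eLpNorm (tp x c) 2 ν = eLpNorm (f - (f - tp x c)) 2 ν := by simp
          _ ≤ eLpNorm f 2 ν + eLpNorm (f - tp x c) 2 ν :=
            eLpNorm_sub_le (hfa ν) ((hfa ν).sub (hp ν)) (by norm_num)
          _ ≤ _ := by gcongr
      calc eLpNorm f 2 μ = eLpNorm ((f - tp x c) + tp x c) 2 μ := by simp
        _ ≤ eLpNorm (f - tp x c) 2 μ + eLpNorm (tp x c) 2 μ :=
            eLpNorm_add_le ((hfa μ).sub (hp μ)) (hp μ) (by norm_num)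
        _ ≤ ε + s * (eLpNorm f 2 ν + ε) := by
            gcongr
            exact h3.trans (by gcongr)
        _ = _ := by ring
    refine ENNReal.le_of_forall_pos_le_add fun δ hδ _ => ?_
    have hne : s + 1 ≠ ⊤ := by simp [hsfin]
    have hne0 : s + 1 ≠ 0 := by simp
    refine (main (δ / (s + 1)) (ENNReal.div_pos (by simpa using hδ.ne') hne)).trans ?_
    rw [ENNReal.mul_div_cancel hne0 hne]
  rw [hs, ← ENNReal.mul_rpow_of_nonneg _ _ (by norm_num)] at hle
  exact (ENNReal.rpow_le_rpow_iff (by norm_num)).1 hle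

lemma psd_iff {d : ℕ}
    (μ ν : Measure (EuclideanSpace ℝ (Fin d))) [IsFiniteMeasure μ] [IsFiniteMeasure ν]
    (K G : EuclideanSpace ℝ (Fin d) → EuclideanSpace ℝ (Fin d) → ℂ)
    (hK : ∀ x y, K x y = ∫ ξ, chi (x - y) ξ ∂μ)
    (hG : ∀ x y, G x y = ∫ ξ, chi (x - y) ξ ∂ν) (lam : ℝ) (hl : 0 ≤ lam) :
    IsPSDKernel (fun x y => (lam : ℂ) * G x y - K x y) ↔
      (μ ≪ ν ∧ essSup (μ.rnDeriv ν) ν ≤ ENNReal.ofReal lam) := by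
  have hquad : ∀ (n : ℕ) (x : Fin n → EuclideanSpace ℝ (Fin d)) (c : Fin n → ℂ),
      ∑ j, ∑ k, c j * (starRingEnd ℂ) (c k) * ((lam : ℂ) * G (x j) (x k) - K (x j) (x k))
      = ((lam * (∫ ξ, ‖tp x c ξ‖ ^ 2 ∂ν) - ∫ ξ, ‖tp x c ξ‖ ^ 2 ∂μ : ℝ) : ℂ) := by
    intro n x c
    push_cast only [Complex.ofReal_sub, Complex.ofReal_mul]
    rw [← quad_eq, ← quad_eq, Finset.mul_sum, ← Finset.sum_sub_distrib]
    refine Finset.sum_congr rfl fun j _ => ?_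
    rw [Finset.mul_sum, ← Finset.sum_sub_distrib]
    refine Finset.sum_congr rfl fun k _ => ?_
    rw [hK, hG]; ring
  have e1 : IsPSDKernel (fun x y => (lam : ℂ) * G x y - K x y) ↔
      ∀ (n : ℕ) (x : Fin n → EuclideanSpace ℝ (Fin d)) (c : Fin n → ℂ),
      ∫ ξ, ‖tp x c ξ‖ ^ 2 ∂μ ≤ lam * ∫ ξ, ‖tp x c ξ‖ ^ 2 ∂ν := by
    unfold IsPSDKernel
    simp_rw [hquad, Complex.zero_le_real, sub_nonneg]
  rw [e1]
  constructor
  · intro h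
    have hS := measure_le μ ν lam hl h
    have hac : μ ≪ ν := Measure.AbsolutelyContinuous.mk fun S hm h0 => by
      have := hS S hm
      rw [h0, mul_zero] at this
      exact le_antisymm this bot_le
    refine ⟨hac, essSup_le_of_ae_le _ ?_⟩
    refine ae_le_of_forall_setLIntegral_le_of_sigmaFinite (μ := ν)
      (Measure.measurable_rnDeriv μ ν) fun S hm _ => ?_
    rw [setLIntegral_const]
    exact (Measure.setLIntegral_rnDeriv_le S).trans (hS S hm)
  · rintro ⟨hac, hsup⟩ n x c
    have hdec : μ.HaveLebesgueDecomposition ν :=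
      Measure.haveLebesgueDecomposition_of_sigmaFinite μ ν
    have hle : μ ≤ ENNReal.ofReal lam • ν := by
      rw [Measure.le_iff]
      intro S hm
      rw [← Measure.setLIntegral_rnDeriv hac S, Measure.smul_apply, smul_eq_mul,
        ← setLIntegral_const]
      refine lintegral_mono_ae (ae_restrict_of_ae ?_)
      filter_upwards [ENNReal.ae_le_essSup (μ := ν) (μ.rnDeriv ν)] with ξ hξ
      exact hξ.trans hsup
    have hint : Integrable (fun ξ => ‖tp x c ξ‖ ^ 2) (ENNReal.ofReal lam • ν) :=
      ((tp_memLp x c ν).integrable_norm_pow (by norm_num)).smul_measure (by simp)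
    have := integral_mono_measure hle
      (Filter.Eventually.of_forall fun ξ => by positivity) hint
    rwa [integral_smul_measure, ENNReal.toReal_ofReal hl, smul_eq_mul] at this

end

/-- For translation invariant kernels `K, G` given as Fourier transforms of finite
positive Borel measures `μ, ν` on `ℝ^d`, there exists `λ ≥ 0` with `λG − K` a positive
semidefinite kernel iff `μ ≪ ν` with `dμ/dν` `ν`-essentially bounded; in that case the
infimum of such `λ` is the `ν`-essential supremum of `dμ/dν`. -/
theorem translationInvariant_inclusion_iff (d : ℕ)
    (μ ν : Measure (EuclideanSpace ℝ (Fin d))) [IsFiniteMeasure μ] [IsFiniteMeasure ν]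
    (K G : EuclideanSpace ℝ (Fin d) → EuclideanSpace ℝ (Fin d) → ℂ)
    (hK : ∀ x y, K x y = ∫ ξ, Complex.exp (Complex.I * ((inner ℝ (x - y) ξ : ℝ) : ℂ)) ∂μ)
    (hG : ∀ x y, G x y = ∫ ξ, Complex.exp (Complex.I * ((inner ℝ (x - y) ξ : ℝ) : ℂ)) ∂ν) :
    ((∃ lam : ℝ, 0 ≤ lam ∧
        IsPSDKernel (fun x y => (lam : ℂ) * G x y - K x y)) ↔
      (μ ≪ ν ∧ essSup (μ.rnDeriv ν) ν < ⊤)) ∧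
    ((μ ≪ ν ∧ essSup (μ.rnDeriv ν) ν < ⊤) →
      sInf {lam : ℝ | 0 ≤ lam ∧
          IsPSDKernel (fun x y => (lam : ℂ) * G x y - K x y)}
        = (essSup (μ.rnDeriv ν) ν).toReal) := by
  have hiff := psd_iff μ ν K G hK hG
  refine ⟨⟨?_, ?_⟩, ?_⟩
  · rintro ⟨lam, hl, h⟩
    obtain ⟨h1, h2⟩ := (hiff lam hl).1 h
    exact ⟨h1, h2.trans_lt ENNReal.ofReal_lt_top⟩
  · rintro ⟨h1, h2⟩
    refine ⟨(essSup (μ.rnDeriv ν) ν).toReal, ENNReal.toReal_nonneg, ?_⟩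
    rw [hiff _ ENNReal.toReal_nonneg, ENNReal.ofReal_toReal h2.ne]
    exact ⟨h1, le_rfl⟩
  · rintro ⟨h1, h2⟩
    have : {lam : ℝ | 0 ≤ lam ∧ IsPSDKernel (fun x y => (lam : ℂ) * G x y - K x y)}
        = Set.Ici (essSup (μ.rnDeriv ν) ν).toReal := by
      ext lam
      simp only [Set.mem_ofPred_eq, Set.mem_Ici]
      constructor
      · rintro ⟨hl, h⟩
        exact ENNReal.toReal_le_of_le_ofReal hl ((hiff lam hl).1 h).2
      · intro h
        have hl : 0 ≤ lam := ENNReal.toReal_nonneg.trans h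
        exact ⟨hl, (hiff lam hl).2 ⟨h1, (ENNReal.le_ofReal_iff_toReal_le h2.ne hl).2 h⟩⟩
    rw [this, csInf_Ici]
end

section
/- Let u, v be nonnegative functions in L¹(ℝ^d) and define kernels K(x,y) = ∫_{ℝ^d} e^{i⟨x−y,ξ⟩} u(ξ) dξ and G(x,y) = ∫_{ℝ^d} e^{i⟨x−y,ξ⟩} v(ξ) dξ for x, y ∈ ℝ^d. Then there exists λ ≥ 0 such that λG − K is a positive semidefinite kernel if and only if the set {t ∈ ℝ^d : u(t) > 0 and v(t) = 0} has Lebesgue measure zero and u/v is essentially bounded (with respect to Lebesgue measure) on {t ∈ ℝ^d : v(t) > 0}; in that case, the infimum of all such λ equals the essential supremum of u/v on {t ∈ ℝ^d : v(t) > 0}. -/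
open MeasureTheory
open scoped ComplexOrder

namespace FDI

open Filter Topology

/-- Trigonometric polynomials on `ℝ^d`. -/
def Trig {d : ℕ} (p : EuclideanSpace ℝ (Fin d) → ℂ) : Prop :=
  ∃ (ι : Type) (_ : Fintype ι) (x : ι → EuclideanSpace ℝ (Fin d)) (c : ι → ℂ),
    ∀ ξ, p ξ = ∑ j, c j * Complex.exp (Complex.I * ((inner ℝ (x j) ξ : ℝ) : ℂ))

lemma Trig.one {d : ℕ} : Trig (fun _ : EuclideanSpace ℝ (Fin d) => (1 : ℂ)) :=
  ⟨Unit, inferInstance, fun _ => 0, fun _ => 1, fun ξ => by simp⟩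

lemma Trig.mul {d : ℕ} {p q : EuclideanSpace ℝ (Fin d) → ℂ} (hp : Trig p) (hq : Trig q) :
    Trig (fun ξ => p ξ * q ξ) := by
  obtain ⟨ι, _, x, c, h⟩ := hp
  obtain ⟨κ, _, y, e, k⟩ := hq
  refine ⟨ι × κ, inferInstance, fun z => x z.1 + y z.2, fun z => c z.1 * e z.2, fun ξ => ?_⟩
  simp only [h, k]
  rw [Finset.sum_mul_sum, Fintype.sum_prod_type]
  refine Finset.sum_congr rfl fun i _ => Finset.sum_congr rfl fun j _ => ?_
  rw [inner_add_left, Complex.ofReal_add, mul_add, Complex.exp_add]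
  ring

lemma Trig.pow {d : ℕ} {p : EuclideanSpace ℝ (Fin d) → ℂ} (hp : Trig p) (n : ℕ) :
    Trig (fun ξ => p ξ ^ n) := by
  induction n with
  | zero => simpa using Trig.one
  | succ n ih => simpa only [pow_succ] using ih.mul hp

lemma Trig.prod {d : ℕ} {κ : Type} (s : Finset κ) (p : κ → EuclideanSpace ℝ (Fin d) → ℂ)
    (hp : ∀ i, Trig (p i)) : Trig (fun ξ => ∏ i ∈ s, p i ξ) := by
  classical
  induction s using Finset.induction_on with
  | empty => simpa using Trig.one
  | insert a s ha ih =>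
    simp only [Finset.prod_insert ha]
    exact (hp a).mul ih

lemma Trig.cos {d : ℕ} (b h : ℝ) (i : Fin d) :
    Trig (fun ξ : EuclideanSpace ℝ (Fin d) => ((Real.cos (b * (ξ i - h)) : ℝ) : ℂ)) := by
  refine ⟨Bool, inferInstance,
    fun z => if z then EuclideanSpace.single i b else EuclideanSpace.single i (-b),
    fun z => if z then Complex.exp (-(b * h * Complex.I)) / 2
      else Complex.exp (b * h * Complex.I) / 2, fun ξ => ?_⟩
  simp only [Fintype.sum_bool, if_true, Bool.false_eq_true, if_false,
    EuclideanSpace.inner_single_left]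
  rw [Complex.ofReal_cos, Complex.cos, div_mul_eq_mul_div, div_mul_eq_mul_div, ← Complex.exp_add,
    ← Complex.exp_add, add_div]
  congr 3 <;> · simp; ring

lemma tendsto_cos_pow (t : ℝ) :
    Tendsto (fun n : ℕ => Real.cos (t / √n) ^ n) atTop (𝓝 (Real.exp (-t ^ 2 / 2))) := by
  have h : Tendsto (fun n : ℕ => (n : ℝ) * (Real.cos (t / √n) - 1)) atTop (𝓝 (-t ^ 2 / 2)) := by
    rw [← tendsto_sub_nhds_zero_iff]
    have h0 : Tendsto (fun n : ℕ => t ^ 4 * (5 / 96) / (n : ℝ)) atTop (𝓝 0) :=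
      tendsto_const_div_atTop_nhds_zero_nat _
    refine squeeze_zero_norm' ?_ h0
    filter_upwards [eventually_gt_atTop 0, eventually_ge_atTop ⌈t ^ 2⌉₊] with n hn hn2
    have hn0 : (0 : ℝ) < n := by exact_mod_cast hn
    have hs : √(n : ℝ) ^ 2 = n := Real.sq_sqrt hn0.le
    have hs0 : 0 < √(n : ℝ) := Real.sqrt_pos.2 hn0
    have h1 : |t / √n| ≤ 1 := by
      rw [← sq_le_one_iff_abs_le_one, div_pow, hs, div_le_one hn0]
      exact Nat.ceil_le.1 hn2
    have h2 := Real.cos_bound h1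
    have e4 : |t / √n| ^ 4 = t ^ 4 / (n : ℝ) ^ 2 := by
      rw [show |t / √n| ^ 4 = (|t / √n| ^ 2) ^ 2 by ring, sq_abs, div_pow, hs, div_pow]
      ring
    rw [e4, div_pow, hs] at h2
    have e : (n : ℝ) * (Real.cos (t / √n) - 1) - -t ^ 2 / 2
        = n * (Real.cos (t / √n) - (1 - t ^ 2 / n / 2)) := by
      field_simp; ring
    rw [e, Real.norm_eq_abs, abs_mul, abs_of_pos hn0]
    refine (mul_le_mul_of_nonneg_left h2 hn0.le).trans (le_of_eq ?_)
    field_simp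
  simpa using Real.tendsto_one_add_pow_exp_of_tendsto h

variable {d : ℕ}


lemma gauss_nonneg (w : EuclideanSpace ℝ (Fin d) → ℝ) (hw : Integrable w)
    (H : ∀ p : EuclideanSpace ℝ (Fin d) → ℂ, Trig p → 0 ≤ ∫ ξ, ‖p ξ‖ ^ 2 * w ξ)
    (a : ℝ) (η : EuclideanSpace ℝ (Fin d)) :
    0 ≤ ∫ ξ, Real.exp (-‖a • (η - ξ)‖ ^ 2) * w ξ := by
  let p : ℕ → EuclideanSpace ℝ (Fin d) → ℝ :=
    fun n ξ => ∏ i, Real.cos ((a / √n) * (ξ i - η i)) ^ n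
  have hpT : ∀ n, Trig (fun ξ => ((p n ξ : ℝ) : ℂ)) := by
    intro n
    have := Trig.prod (d := d) Finset.univ
      (fun i ξ => ((Real.cos ((a / √n) * (ξ i - η i)) : ℝ) : ℂ) ^ n)
      (fun i => (Trig.cos (a / √n) (η i) i).pow n)
    simpa [p] using this
  have hp1 : ∀ n ξ, |p n ξ| ≤ 1 := by
    intro n ξ
    simp only [p, Finset.abs_prod, abs_pow]
    exact Finset.prod_le_one (fun i _ => by positivity)
      (fun i _ => pow_le_one₀ (abs_nonneg _) (Real.abs_cos_le_one _))
  have hlim : ∀ ξ, Tendsto (fun n => p n ξ ^ 2) atTop (𝓝 (Real.exp (-‖a • (η - ξ)‖ ^ 2))) := by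
    intro ξ
    have h1 : Tendsto (fun n => p n ξ) atTop
        (𝓝 (∏ i, Real.exp (-(a * (ξ i - η i)) ^ 2 / 2))) := by
      refine tendsto_finsetProd _ fun i _ => ?_
      convert tendsto_cos_pow (a * (ξ i - η i)) using 4
      ring
    convert h1.pow 2 using 2
    rw [← Real.exp_sum, ← Real.exp_nat_mul, EuclideanSpace.real_norm_sq_eq]
    congr 1
    rw [← Finset.sum_neg_distrib, Finset.mul_sum]
    refine Finset.sum_congr rfl fun i _ => ?_
    simp
    ring
  have hcont : ∀ n, Continuous (p n) := by
    intro n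
    simp only [p]
    fun_prop
  have hT : Tendsto (fun n => ∫ ξ, p n ξ ^ 2 * w ξ) atTop
      (𝓝 (∫ ξ, Real.exp (-‖a • (η - ξ)‖ ^ 2) * w ξ)) := by
    refine tendsto_integral_of_dominated_convergence (fun ξ => ‖w ξ‖) ?_ hw.norm ?_ ?_
    · intro n
      exact ((hcont n).pow 2).aestronglyMeasurable.mul hw.1
    · intro n
      refine Eventually.of_forall fun ξ => ?_
      rw [norm_mul]
      refine mul_le_of_le_one_left (norm_nonneg _) ?_
      rw [norm_pow]
      exact pow_le_one₀ (norm_nonneg _) (hp1 n ξ)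
    · exact Eventually.of_forall fun ξ => (hlim ξ).mul_const _
  refine ge_of_tendsto' hT fun n => ?_
  simpa using H _ (hpT n)

lemma int_nonneg (w : EuclideanSpace ℝ (Fin d) → ℝ) (hw : Integrable w)
    (H : ∀ (a : ℝ) (η : EuclideanSpace ℝ (Fin d)),
      0 ≤ ∫ ξ, Real.exp (-‖a • (η - ξ)‖ ^ 2) * w ξ)
    (g : EuclideanSpace ℝ (Fin d) → ℝ) (hg : Continuous g) (hgi : Integrable g)
    (hg0 : ∀ t, 0 ≤ g t) (hg1 : ∀ t, g t ≤ 1) : 0 ≤ ∫ ξ, g ξ * w ξ := by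
  have hei : Integrable (fun z : EuclideanSpace ℝ (Fin d) => Real.exp (-‖z‖ ^ 2)) := by
    have h := (GaussianFourier.integrable_cexp_neg_mul_sq_norm_add (b := 1) (by simp) 0
      (0 : EuclideanSpace ℝ (Fin d))).norm
    refine h.congr (Eventually.of_forall fun z => ?_)
    simp only [Complex.norm_exp]
    congr 1
    norm_cast
    simp [← Complex.ofReal_pow]
  have hC0 : (∫ z : EuclideanSpace ℝ (Fin d), Real.exp (-‖z‖ ^ 2)) ≠ 0 := by
    have := GaussianFourier.integral_rexp_neg_mul_sq_norm (V := EuclideanSpace ℝ (Fin d))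
      (b := 1) one_pos
    simp only [neg_mul, one_mul] at this
    rw [this]
    positivity
  set C := ∫ z : EuclideanSpace ℝ (Fin d), Real.exp (-‖z‖ ^ 2) with hC
  have hCpos : 0 < C := lt_of_le_of_ne (integral_nonneg fun z => (Real.exp_pos _).le) hC0.symm
  -- the smoothed function
  let Φ : ℕ → EuclideanSpace ℝ (Fin d) → ℝ :=
    fun n ξ => ∫ z, g (ξ + ((n : ℝ) + 1)⁻¹ • z) * Real.exp (-‖z‖ ^ 2)
  have hΦeq : ∀ (n : ℕ) ξ, Φ n ξ = ((n : ℝ) + 1) ^ d *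
      ∫ η, g η * Real.exp (-‖((n : ℝ) + 1) • (η - ξ)‖ ^ 2) := by
    intro n ξ
    have hn : (0 : ℝ) < (n : ℝ) + 1 := by positivity
    rw [← integral_add_left_eq_self _ ξ]
    have := Measure.integral_comp_smul (volume : Measure (EuclideanSpace ℝ (Fin d)))
      (fun z => g (ξ + ((n : ℝ) + 1)⁻¹ • z) * Real.exp (-‖z‖ ^ 2)) ((n : ℝ) + 1)
    simp only [smul_smul, inv_mul_cancel₀ hn.ne', one_smul, finrank_euclideanSpace,
      Fintype.card_fin, smul_eq_mul] at this
    simp only [add_sub_cancel_left]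
    rw [this, abs_of_pos (by positivity)]
    simp only [Φ]
    field_simp
  have hΦlim : ∀ ξ, Tendsto (fun n => Φ n ξ) atTop (𝓝 (g ξ * C)) := by
    intro ξ
    rw [hC, ← integral_const_mul]
    refine tendsto_integral_of_dominated_convergence (fun z => Real.exp (-‖z‖ ^ 2)) ?_ hei ?_ ?_
    · intro n
      exact Continuous.aestronglyMeasurable (by fun_prop)
    · intro n
      refine Eventually.of_forall fun z => ?_
      rw [norm_mul, Real.norm_of_nonneg (hg0 _), Real.norm_of_nonneg (Real.exp_pos _).le]
      exact mul_le_of_le_one_left (Real.exp_pos _).le (hg1 _)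
    · refine Eventually.of_forall fun z => ?_
      refine Tendsto.mul_const _ ?_
      have h1 : Tendsto (fun n : ℕ => ((n : ℝ) + 1)⁻¹) atTop (𝓝 0) := by
        simpa using tendsto_one_div_add_atTop_nhds_zero_nat (𝕜 := ℝ)
      have h2 : Tendsto (fun n : ℕ => ξ + ((n : ℝ) + 1)⁻¹ • z) atTop (𝓝 ξ) := by
        simpa using (h1.smul_const z).const_add ξ
      exact (hg.tendsto ξ).comp h2
  have hΦb : ∀ n ξ, |Φ n ξ| ≤ C := by
    intro n ξ
    rw [← Real.norm_eq_abs]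
    refine norm_integral_le_of_norm_le hei (Eventually.of_forall fun z => ?_)
    rw [norm_mul, Real.norm_of_nonneg (hg0 _), Real.norm_of_nonneg (Real.exp_pos _).le]
    exact mul_le_of_le_one_left (Real.exp_pos _).le (hg1 _)
  have hint : ∀ a : ℝ, Integrable (Function.uncurry fun (η ξ : EuclideanSpace ℝ (Fin d)) =>
      g η * (Real.exp (-‖a • (η - ξ)‖ ^ 2) * w ξ)) (volume.prod volume) := by
    intro a
    have h1 := hgi.mul_prod hw
    have h2 := h1.bdd_mul (c := 1)
      (f := fun z : EuclideanSpace ℝ (Fin d) × EuclideanSpace ℝ (Fin d) =>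
      Real.exp (-‖a • (z.1 - z.2)‖ ^ 2)) (Continuous.aestronglyMeasurable (by fun_prop))
      (Eventually.of_forall fun z => by
        rw [Real.norm_of_nonneg (Real.exp_pos _).le]
        exact Real.exp_le_one_iff.2 (by simp))
    refine h2.congr (Eventually.of_forall fun z => ?_)
    simp only [Function.uncurry]
    ring
  have hsw : ∀ a : ℝ, ∫ ξ, (∫ η, g η * Real.exp (-‖a • (η - ξ)‖ ^ 2)) * w ξ
      = ∫ η, g η * ∫ ξ, Real.exp (-‖a • (η - ξ)‖ ^ 2) * w ξ := by
    intro a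
    have := integral_integral_swap (hint a)
    simp only [integral_const_mul] at this
    rw [this]
    refine integral_congr_ae (Eventually.of_forall fun ξ => ?_)
    simp only [← integral_mul_const, mul_assoc]
  have hΦw : ∀ n, 0 ≤ ∫ ξ, Φ n ξ * w ξ := by
    intro n
    simp only [hΦeq, mul_assoc, integral_const_mul]
    rw [hsw]
    exact mul_nonneg (by positivity) (integral_nonneg fun η => mul_nonneg (hg0 η) (H _ η))
  have hT : Tendsto (fun n => ∫ ξ, Φ n ξ * w ξ) atTop (𝓝 (∫ ξ, g ξ * C * w ξ)) := by
    refine tendsto_integral_of_dominated_convergence (fun ξ => C * ‖w ξ‖) ?_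
      (hw.norm.const_mul C) ?_ ?_
    · intro n
      refine AEStronglyMeasurable.mul (StronglyMeasurable.aestronglyMeasurable ?_) hw.1
      have : Continuous (Function.uncurry fun (ξ z : EuclideanSpace ℝ (Fin d)) =>
        g (ξ + ((n : ℝ) + 1)⁻¹ • z) * Real.exp (-‖z‖ ^ 2)) := by
        simp only [Function.uncurry_def]
        fun_prop
      exact this.stronglyMeasurable.integral_prod_right
    · intro n
      refine Eventually.of_forall fun ξ => ?_
      rw [norm_mul]
      exact mul_le_mul_of_nonneg_right (hΦb n ξ) (norm_nonneg _)
    · exact Eventually.of_forall fun ξ => (hΦlim ξ).mul_const _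
  have h := ge_of_tendsto' hT hΦw
  have e : ∫ ξ, g ξ * C * w ξ = C * ∫ ξ, g ξ * w ξ := by
    rw [← integral_const_mul]
    congr 1; ext ξ; ring
  rw [e] at h
  exact nonneg_of_mul_nonneg_right h hCpos

lemma ae_nonneg (w : EuclideanSpace ℝ (Fin d) → ℝ) (hw : Integrable w)
    (H : ∀ g : EuclideanSpace ℝ (Fin d) → ℝ, Continuous g → Integrable g →
      (∀ t, 0 ≤ g t) → (∀ t, g t ≤ 1) → 0 ≤ ∫ ξ, g ξ * w ξ) :
    ∀ᵐ ξ, 0 ≤ w ξ := by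
  have hF : ∀ F : Set (EuclideanSpace ℝ (Fin d)), IsCompact F → 0 ≤ ∫ ξ in F, w ξ := by
    intro F hF
    have hpos : ∀ n : ℕ, 0 < 1 / ((n : ℝ) + 1) := fun n => by positivity
    have hl := thickenedIndicator_tendsto_indicator_closure hpos
      tendsto_one_div_add_atTop_nhds_zero_nat F
    rw [tendsto_pi_nhds] at hl
    have hT : Tendsto (fun n => ∫ ξ, ((thickenedIndicator (hpos n) F ξ : NNReal) : ℝ) * w ξ) atTop
      (𝓝 (∫ ξ, F.indicator w ξ)) := by
      refine tendsto_integral_of_dominated_convergence (fun ξ => ‖w ξ‖) ?_ hw.norm ?_ ?_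
      · intro n
        refine AEStronglyMeasurable.mul (Continuous.aestronglyMeasurable ?_) hw.1
        fun_prop
      · intro n
        refine Eventually.of_forall fun ξ => ?_
        rw [norm_mul]
        refine mul_le_of_le_one_left (norm_nonneg _) ?_
        simpa using thickenedIndicator_le_one (hpos n) F ξ
      · refine Eventually.of_forall fun ξ => ?_
        have h1 := (NNReal.tendsto_coe.2 (hl ξ)).mul_const (w ξ)
        convert h1 using 2
        rw [hF.isClosed.closure_eq]
        by_cases hx : ξ ∈ F <;> simp [hx]
    rw [← integral_indicator hF.measurableSet]
    refine ge_of_tendsto' hT fun n => H _ (by fun_prop) ?_ (fun t => NNReal.coe_nonneg _)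
      (fun t => by exact_mod_cast thickenedIndicator_le_one (hpos n) F t)
    have hb : volume (Metric.thickening (1 / ((n : ℝ) + 1)) F) < ⊤ :=
      hF.isBounded.thickening.measure_lt_top
    have hi : Integrable ((Metric.thickening (1 / ((n : ℝ) + 1)) F).indicator
        (fun _ => (1 : ℝ))) :=
      (integrable_indicator_iff Metric.isOpen_thickening.measurableSet).2
        (integrableOn_const hb.ne)
    refine hi.mono' (Continuous.aestronglyMeasurable (by fun_prop))
      (Eventually.of_forall fun t => ?_)
    by_cases ht : t ∈ Metric.thickening (1 / ((n : ℝ) + 1)) F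
    · rw [Set.indicator_of_mem ht, NNReal.norm_eq]
      exact_mod_cast thickenedIndicator_le_one (hpos n) F t
    · rw [Set.indicator_of_notMem ht, thickenedIndicator_zero (hpos n) F ht]
      exact norm_zero.le
  -- measurable representative
  have hm := hw.1
  set w' := hm.mk w
  have hww : w =ᵐ[volume] w' := hm.ae_eq_mk
  have hwm : Measurable w' := hm.stronglyMeasurable_mk.measurable
  suffices h : ∀ᵐ ξ, 0 ≤ w' ξ by
    filter_upwards [h, hww] with ξ h1 h2
    rwa [h2]
  rw [ae_iff]
  by_contra hne
  have hS : MeasurableSet {a | ¬ 0 ≤ w' a} := by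
    simp only [not_le]
    exact measurableSet_lt hwm measurable_const
  obtain ⟨F, hFS, hFc, hFpos⟩ := hS.exists_lt_isCompact (pos_iff_ne_zero.2 hne)
  have h1 := hF F hFc
  have h2 : ∫ ξ in F, w ξ = - ∫ ξ in F, -w' ξ := by
    rw [integral_neg, neg_neg]
    exact integral_congr_ae (ae_restrict_of_ae hww)
  have h3 : 0 < ∫ ξ in F, -w' ξ := by
    rw [setIntegral_pos_iff_support_of_nonneg_ae]
    · refine hFpos.trans_le (measure_mono fun x hx => ⟨?_, hx⟩)
      have : w' x < 0 := not_le.1 (hFS hx)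
      simp [this.ne]
    · rw [EventuallyLE, ae_restrict_iff' hFc.measurableSet]
      refine Eventually.of_forall fun x hx => ?_
      have : w' x < 0 := not_le.1 (hFS hx)
      simp [this.le]
    · exact ((hw.congr hww).neg).integrableOn
  linarith

end FDI

namespace FDI

open Filter Topology

variable {d : ℕ}

lemma integrable_exp_mul (u : EuclideanSpace ℝ (Fin d) → ℝ) (hu : Integrable u)
    (x : EuclideanSpace ℝ (Fin d)) :
    Integrable (fun ξ => Complex.exp (Complex.I * ((inner ℝ x ξ : ℝ) : ℂ)) * (u ξ : ℂ)) := by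
  refine hu.ofReal.bdd_mul (c := 1) (Continuous.aestronglyMeasurable (by fun_prop))
    (Eventually.of_forall fun ξ => ?_)
  rw [Complex.norm_exp_I_mul_ofReal]

lemma psd_form {ι : Type} [Fintype ι]
    (u v : EuclideanSpace ℝ (Fin d) → ℝ) (hu : Integrable u) (hv : Integrable v)
    (K G : EuclideanSpace ℝ (Fin d) → EuclideanSpace ℝ (Fin d) → ℂ)
    (hK : ∀ x y, K x y
      = ∫ ξ, Complex.exp (Complex.I * ((inner ℝ (x - y) ξ : ℝ) : ℂ)) * (u ξ : ℂ))
    (hG : ∀ x y, G x y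
      = ∫ ξ, Complex.exp (Complex.I * ((inner ℝ (x - y) ξ : ℝ) : ℂ)) * (v ξ : ℂ))
    (lam : ℝ) (x : ι → EuclideanSpace ℝ (Fin d)) (c : ι → ℂ) :
    ∑ j, ∑ k, c j * (starRingEnd ℂ) (c k) * ((lam : ℂ) * G (x j) (x k) - K (x j) (x k))
    = ((∫ ξ, ‖∑ j, c j * Complex.exp (Complex.I * ((inner ℝ (x j) ξ : ℝ) : ℂ))‖ ^ 2
        * (lam * v ξ - u ξ) : ℝ) : ℂ) := by
  have hw : Integrable (fun ξ => lam * v ξ - u ξ) := (hv.const_mul lam).sub hu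
  have h1 : ∀ j k, (lam : ℂ) * G (x j) (x k) - K (x j) (x k)
      = ∫ ξ, Complex.exp (Complex.I * ((inner ℝ (x j - x k) ξ : ℝ) : ℂ))
        * ((lam * v ξ - u ξ : ℝ) : ℂ) := by
    intro j k
    rw [hK, hG, ← integral_const_mul, ← integral_sub ((integrable_exp_mul v hv _).const_mul _)
      (integrable_exp_mul u hu _)]
    congr 1; ext ξ; push_cast; ring
  simp only [h1, ← integral_const_mul]
  have hi : ∀ j k, Integrable (fun ξ => c j * (starRingEnd ℂ) (c k) *
      (Complex.exp (Complex.I * ((inner ℝ (x j - x k) ξ : ℝ) : ℂ))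
        * ((lam * v ξ - u ξ : ℝ) : ℂ))) := fun j k =>
    (integrable_exp_mul _ hw _).const_mul _
  have h2 : ∀ j, ∑ k, ∫ ξ, c j * (starRingEnd ℂ) (c k) *
      (Complex.exp (Complex.I * ((inner ℝ (x j - x k) ξ : ℝ) : ℂ))
        * ((lam * v ξ - u ξ : ℝ) : ℂ)) = ∫ ξ, ∑ k, c j * (starRingEnd ℂ) (c k) *
      (Complex.exp (Complex.I * ((inner ℝ (x j - x k) ξ : ℝ) : ℂ))
        * ((lam * v ξ - u ξ : ℝ) : ℂ)) := fun j =>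
    (integral_finsetSum _ fun k _ => hi j k).symm
  simp only [h2]
  rw [← integral_finsetSum _ fun j _ => integrable_finsetSum _ fun k _ => hi j k,
    ← integral_complex_ofReal]
  congr 1; ext ξ
  rw [Complex.ofReal_mul, Complex.ofReal_pow, ← Complex.mul_conj', map_sum, Finset.sum_mul_sum,
    Finset.sum_mul]
  refine Finset.sum_congr rfl fun j _ => ?_
  rw [Finset.sum_mul]
  refine Finset.sum_congr rfl fun k _ => ?_
  rw [map_mul, ← Complex.exp_conj, map_mul, Complex.conj_I, Complex.conj_ofReal, inner_sub_left,
    Complex.ofReal_sub, mul_sub, sub_eq_add_neg, Complex.exp_add, neg_mul]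
  ring

lemma psd_iff
    (u v : EuclideanSpace ℝ (Fin d) → ℝ) (hu : Integrable u) (hv : Integrable v)
    (K G : EuclideanSpace ℝ (Fin d) → EuclideanSpace ℝ (Fin d) → ℂ)
    (hK : ∀ x y, K x y
      = ∫ ξ, Complex.exp (Complex.I * ((inner ℝ (x - y) ξ : ℝ) : ℂ)) * (u ξ : ℂ))
    (hG : ∀ x y, G x y
      = ∫ ξ, Complex.exp (Complex.I * ((inner ℝ (x - y) ξ : ℝ) : ℂ)) * (v ξ : ℂ))
    (lam : ℝ) :
    IsPSDKernel (fun x y => (lam : ℂ) * G x y - K x y) ↔ ∀ᵐ ξ, u ξ ≤ lam * v ξ := by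
  have hw : Integrable (fun ξ => lam * v ξ - u ξ) := (hv.const_mul lam).sub hu
  constructor
  · intro h
    have h1 : ∀ p : EuclideanSpace ℝ (Fin d) → ℂ, Trig p →
        0 ≤ ∫ ξ, ‖p ξ‖ ^ 2 * (lam * v ξ - u ξ) := by
      rintro p ⟨ι, _, x, c, hp⟩
      have e := Fintype.equivFin ι
      have h2 := h (Fintype.card ι) (x ∘ e.symm) (c ∘ e.symm)
      rw [psd_form u v hu hv K G hK hG, Complex.zero_le_real] at h2
      simp only [hp]
      convert h2 using 6 with ξ
      exact (Equiv.sum_comp e.symm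
        (fun j => c j * Complex.exp (Complex.I * ((inner ℝ (x j) ξ : ℝ) : ℂ)))).symm
    have h3 := ae_nonneg _ hw fun g a b c e =>
      int_nonneg _ hw (gauss_nonneg _ hw h1) g a b c e
    filter_upwards [h3] with ξ h
    linarith
  · intro h n x c
    rw [psd_form u v hu hv K G hK hG, Complex.zero_le_real]
    refine integral_nonneg_of_ae ?_
    filter_upwards [h] with ξ h
    exact mul_nonneg (by positivity) (by linarith)

lemma ae_iff_ratio
    (u v : EuclideanSpace ℝ (Fin d) → ℝ) (hu0 : ∀ t, 0 ≤ u t) (hv0 : ∀ t, 0 ≤ v t)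
    (hv : Integrable v) (lam : ℝ) :
    (∀ᵐ ξ, u ξ ≤ lam * v ξ) ↔ (volume {t | 0 < u t ∧ v t = 0} = 0 ∧
      ∀ᵐ t ∂(volume.restrict {t | 0 < v t}), u t / v t ≤ lam) := by
  have hm : NullMeasurableSet {t | 0 < v t} :=
    nullMeasurableSet_lt aemeasurable_const hv.1.aemeasurable
  have e : volume {t | 0 < u t ∧ v t = 0} = 0 ↔ ∀ᵐ t, ¬ (0 < u t ∧ v t = 0) := by
    rw [ae_iff]; simp only [not_not]
  rw [e, ae_restrict_iff'₀ hm, ← eventually_and]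
  refine eventually_congr (Eventually.of_forall fun t => ?_)
  simp only [Set.mem_setOf_eq]
  constructor
  · intro h
    refine ⟨fun ⟨h1, h2⟩ => ?_, fun h1 => (div_le_iff₀ h1).2 h⟩
    rw [h2, mul_zero] at h
    linarith
  · rintro ⟨h1, h2⟩
    rcases (hv0 t).eq_or_lt with h0 | h0
    · rw [← h0, mul_zero]
      by_contra hc
      exact h1 ⟨not_le.1 hc, h0.symm⟩
    · exact (div_le_iff₀ h0).1 (h2 h0)

end FDI

/-- For kernels `K, G` given as Fourier transforms of nonnegative `L¹` densities
`u, v` on `ℝ^d`, there exists `λ ≥ 0` with `λG − K` positive semidefinite iff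
`{u > 0, v = 0}` is Lebesgue-null and `u/v` is essentially bounded on `{v > 0}`;
in that case the infimum of such `λ` equals the essential supremum of `u/v` on `{v > 0}`. -/
theorem fourierDensity_inclusion_iff (d : ℕ)
    (u v : EuclideanSpace ℝ (Fin d) → ℝ)
    (hu0 : ∀ t, 0 ≤ u t) (hv0 : ∀ t, 0 ≤ v t)
    (hu : Integrable u) (hv : Integrable v)
    (K G : EuclideanSpace ℝ (Fin d) → EuclideanSpace ℝ (Fin d) → ℂ)
    (hK : ∀ x y, K x y
      = ∫ ξ, Complex.exp (Complex.I * ((inner ℝ (x - y) ξ : ℝ) : ℂ)) * (u ξ : ℂ))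
    (hG : ∀ x y, G x y
      = ∫ ξ, Complex.exp (Complex.I * ((inner ℝ (x - y) ξ : ℝ) : ℂ)) * (v ξ : ℂ)) :
    ((∃ lam : ℝ, 0 ≤ lam ∧
        IsPSDKernel (fun x y => (lam : ℂ) * G x y - K x y)) ↔
      (volume {t | 0 < u t ∧ v t = 0} = 0 ∧
        ∃ M : ℝ, ∀ᵐ t ∂(volume.restrict {t | 0 < v t}), u t / v t ≤ M)) ∧
    ((volume {t | 0 < u t ∧ v t = 0} = 0 ∧
        ∃ M : ℝ, ∀ᵐ t ∂(volume.restrict {t | 0 < v t}), u t / v t ≤ M) →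
      sInf {lam : ℝ | 0 ≤ lam ∧
          IsPSDKernel (fun x y => (lam : ℂ) * G x y - K x y)}
        = essSup (fun t => u t / v t) (volume.restrict {t | 0 < v t})) := by
  have key : ∀ lam : ℝ, IsPSDKernel (fun x y => (lam : ℂ) * G x y - K x y) ↔
      (volume {t | 0 < u t ∧ v t = 0} = 0 ∧
        ∀ᵐ t ∂(volume.restrict {t | 0 < v t}), u t / v t ≤ lam) := fun lam =>
    (FDI.psd_iff u v hu hv K G hK hG lam).trans (FDI.ae_iff_ratio u v hu0 hv0 hv lam)
  refine ⟨⟨?_, ?_⟩, ?_⟩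
  · rintro ⟨lam, -, h⟩
    obtain ⟨h1, h2⟩ := (key lam).1 h
    exact ⟨h1, lam, h2⟩
  · rintro ⟨h1, M, h2⟩
    refine ⟨max M 0, le_max_right _ _, (key _).2 ⟨h1, ?_⟩⟩
    filter_upwards [h2] with t ht
    exact ht.trans (le_max_left _ _)
  · rintro ⟨h1, -⟩
    have hset : {lam : ℝ | 0 ≤ lam ∧ IsPSDKernel (fun x y => (lam : ℂ) * G x y - K x y)}
        = {lam : ℝ | 0 ≤ lam ∧ ∀ᵐ t ∂(volume.restrict {t | 0 < v t}), u t / v t ≤ lam} := by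
      ext lam
      simp only [Set.mem_setOf_eq, key, h1, true_and]
    rw [hset]
    have hess : essSup (fun t => u t / v t) (volume.restrict {t | 0 < v t})
        = sInf {lam : ℝ | ∀ᵐ t ∂(volume.restrict {t | 0 < v t}), u t / v t ≤ lam} := by
      rw [essSup_eq_sInf]
      simp only [ae_iff, not_le]
    rw [hess]
    by_cases hz : volume.restrict {t | 0 < v t} = 0
    · rw [hz]
      have e1 : {lam : ℝ | 0 ≤ lam ∧ ∀ᵐ t ∂(0 : Measure (EuclideanSpace ℝ (Fin d))),
          u t / v t ≤ lam} = Set.Ici 0 := by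
        ext; simp
      have e2 : {lam : ℝ | ∀ᵐ t ∂(0 : Measure (EuclideanSpace ℝ (Fin d))),
          u t / v t ≤ lam} = Set.univ := by
        ext; simp
      rw [e1, e2, csInf_Ici, Real.sInf_univ]
    · congr 1
      ext lam
      simp only [Set.mem_setOf_eq, and_iff_right_iff_imp]
      intro h
      haveI := ae_neBot.2 hz
      obtain ⟨t, ht⟩ := h.exists
      exact (div_nonneg (hu0 t) (hv0 t)).trans ht
end
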